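/- For every n ≥ 0, the Laakso graph satisfies c₁(TC(La^{⊘n})) ≥ ((2−√2)/8)·n. -/

import Mathlib

open Finset MeasureTheory

open Finset MeasureTheory

/-- The transportation cost norm of a zero-total-mass signed measure `μ` (represented as a
function `V → ℝ`) on a finite metric space with distance `d`: the infimum of costs of
transportation plans representing `μ`. -/
noncomputable def TCnorm {V : Type*} [Fintype V] [DecidableEq V]
    (d : V → V → ℝ) (μ : V → ℝ) : ℝ :=
  sInf { c : ℝ | ∃ (n : ℕ) (a : Fin n → ℝ) (x y : Fin n → V),
    (∀ i, 0 ≤ a i) ∧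
    (∀ z : V, μ z = ∑ i, a i * ((if x i = z then (1 : ℝ) else 0) -
      (if y i = z then (1 : ℝ) else 0))) ∧
    c = ∑ i, a i * d (x i) (y i) }

/-- The `L₁`-distortion of a space `M` equipped with a distance function `ρ`:
the infimum of `D ≥ 1` such that there is a measure space `(Ω, ν)` and a map
`f : M → L₁(ν)` with `ρ x y ≤ ‖f x - f y‖₁ ≤ D * ρ x y` for all `x, y`. -/
noncomputable def c1OfDist {M : Type*} (ρ : M → M → ℝ) : ℝ :=
  sInf { D : ℝ | 1 ≤ D ∧ ∃ (Ω : Type) (_ : MeasurableSpace Ω) (ν : Measure Ω)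
    (f : M → Lp ℝ 1 ν), ∀ x y : M,
      ρ x y ≤ dist (f x) (f y) ∧ dist (f x) (f y) ≤ D * ρ x y }

/-- The `L₁`-distortion of the transportation cost space `TC(V, d)`, i.e. of the space of
zero-total-mass signed measures on `V` with the metric induced by the transportation cost
norm. -/
noncomputable def c1TC {V : Type*} [Fintype V] [DecidableEq V] (d : V → V → ℝ) : ℝ :=
  c1OfDist (fun μ ν : {μ : V → ℝ // ∑ x, μ x = 0} => TCnorm d (fun x => μ.1 x - ν.1 x))

/-- The support of a signed measure given as a function. -/
def msupp {V : Type*} (μ : V → ℝ) : Set V := {x | μ x ≠ 0}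

/-- Diameter of a set with respect to a distance function. -/
noncomputable def sDiam {V : Type*} (d : V → V → ℝ) (S : Set V) : ℝ :=
  sSup { c : ℝ | ∃ x ∈ S, ∃ y ∈ S, c = d x y }

/-- Distance between two sets with respect to a distance function. -/
noncomputable def sDist {V : Type*} (d : V → V → ℝ) (S T : Set V) : ℝ :=
  sInf { c : ℝ | ∃ x ∈ S, ∃ y ∈ T, c = d x y }
/-- A finite weighted directed graph with distinguished source and sink vertices, edge
lengths, and an edge thickness function. This is the underlying data of an `st`-graph. -/
structure WGraph : Type 1 where
  /-- vertex set -/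
  V : Type
  /-- edge index set -/
  ι : Type
  finV : Fintype V
  decV : DecidableEq V
  finι : Fintype ι
  decι : DecidableEq ι
  /-- initial vertex of an edge -/
  src : ι → V
  /-- terminal vertex of an edge -/
  dst : ι → V
  /-- length of an edge -/
  len : ι → ℝ
  /-- thickness of an edge -/
  th : ι → ℝ
  /-- source vertex -/
  s : V
  /-- sink vertex -/
  t : V

attribute [instance] WGraph.finV WGraph.decV WGraph.finι WGraph.decι

namespace WGraph

/-- Initial vertex of a step (an edge traversed forwards or backwards). -/
def stepSrc (G : WGraph) (p : G.ι × Bool) : G.V := if p.2 then G.src p.1 else G.dst p.1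

/-- Terminal vertex of a step. -/
def stepDst (G : WGraph) (p : G.ι × Bool) : G.V := if p.2 then G.dst p.1 else G.src p.1

/-- `G.IsWalk x y l` : the list of steps `l` forms a walk from `x` to `y` in the underlying
undirected graph of `G`. -/
def IsWalk (G : WGraph) : G.V → G.V → List (G.ι × Bool) → Prop
  | x, y, [] => x = y
  | x, y, p :: l => G.stepSrc p = x ∧ G.IsWalk (G.stepDst p) y l

/-- `G.IsDiWalk x y l` : the list of edges `l` forms a directed walk from `x` to `y`. -/
def IsDiWalk (G : WGraph) : G.V → G.V → List G.ι → Prop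
  | x, y, [] => x = y
  | x, y, e :: l => G.src e = x ∧ G.IsDiWalk (G.dst e) y l

/-- The length of a directed walk. -/
def diLen (G : WGraph) (l : List G.ι) : ℝ := (l.map G.len).sum

/-- The weighted shortest-path metric of `G`. -/
noncomputable def gdist (G : WGraph) (x y : G.V) : ℝ :=
  sInf { c : ℝ | ∃ l : List (G.ι × Bool), G.IsWalk x y l ∧
    c = (l.map fun p => G.len p.1).sum }

end WGraph

/-- `G` is an `st`-graph: it has positive edge lengths and thicknesses, it is connected,
its weighted shortest-path metric satisfies `d(s,t) = 1`, every directed path is a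
geodesic, and the thickness function is witnessed by a finite nonempty family of directed
edge paths from `s` to `t` via `th(e) = |{i : e ∈ γ_i}| / |I|`. -/
structure IsSTGraph (G : WGraph) : Prop where
  s_ne_t : G.s ≠ G.t
  len_pos : ∀ e, 0 < G.len e
  th_pos : ∀ e, 0 < G.th e
  conn : ∀ x y : G.V, ∃ l, G.IsWalk x y l
  dist_st : G.gdist G.s G.t = 1
  dir_geodesic : ∀ (x y : G.V) (l : List G.ι), G.IsDiWalk x y l → G.gdist x y = G.diLen l
  th_witness : ∃ (m : ℕ) (γ : Fin (m + 1) → List G.ι),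
    (∀ i, G.IsDiWalk G.s G.t (γ i)) ∧
    ∀ e : G.ι, G.th e = ((Finset.univ.filter fun i => e ∈ γ i).card : ℝ) / (m + 1)

/-- `G` is an `st`-path: it consists of a single directed path from `s` to `t`, and all
edges have thickness `1`. -/
def IsSTPath (G : WGraph) : Prop :=
  ∃ (k : ℕ) (E : Fin k ≃ G.ι) (v : Fin (k + 1) → G.V),
    Function.Bijective v ∧ v 0 = G.s ∧ v (Fin.last k) = G.t ∧
    (∀ i : Fin k, G.src (E i) = v i.castSucc ∧ G.dst (E i) = v i.succ) ∧
    (∀ e, G.th e = 1)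

namespace WGraph

/-- The map sending a vertex of `H` to the corresponding vertex of `G ⊘ H` obtained by
replacing the edge `e` of `G` with a copy of `H` (where `s_H` is identified with the
initial vertex of `e` and `t_H` with the terminal vertex of `e`). -/
def slashEmbed (G H : WGraph) (e : G.ι) (v : H.V) :
    G.V ⊕ (G.ι × {v : H.V // v ≠ H.s ∧ v ≠ H.t}) :=
  if hs : v = H.s then Sum.inl (G.src e)
  else if ht : v = H.t then Sum.inl (G.dst e)
  else Sum.inr (e, ⟨v, hs, ht⟩)

/-- The slash product `G ⊘ H`: every edge of `G` is replaced by a copy of `H`. New edge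
lengths and thicknesses are the products of the corresponding ones of `G` and `H`. -/
def slash (G H : WGraph) : WGraph where
  V := G.V ⊕ (G.ι × {v : H.V // v ≠ H.s ∧ v ≠ H.t})
  ι := G.ι × H.ι
  finV := inferInstance
  decV := inferInstance
  finι := inferInstance
  decι := inferInstance
  src := fun p => slashEmbed G H p.1 (H.src p.2)
  dst := fun p => slashEmbed G H p.1 (H.dst p.2)
  len := fun p => G.len p.1 * H.len p.2
  th := fun p => G.th p.1 * H.th p.2
  s := Sum.inl G.s
  t := Sum.inl G.t

/-- The trivial `st`-path: a single directed edge from `s` to `t` of length 1 and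
thickness 1. -/
def edgeGraph : WGraph where
  V := Bool
  ι := Unit
  finV := inferInstance
  decV := inferInstance
  finι := inferInstance
  decι := inferInstance
  src := fun _ => false
  dst := fun _ => true
  len := fun _ => 1
  th := fun _ => 1
  s := false
  t := true

/-- Slash powers: `G^{⊘0}` is a single directed edge from `s` to `t` of length 1 and
thickness 1, and `G^{⊘(n+1)} = G^{⊘n} ⊘ G`. -/
def slashPow (G : WGraph) : ℕ → WGraph
  | 0 => edgeGraph
  | n + 1 => (G.slashPow n).slash G

end WGraph

/-- The Laakso `st`-graph `La`: obtained from the directed `st`-path with three edges of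
lengths `1/4, 1/2, 1/4` by replacing the middle edge with the `st`-cycle consisting of two
directed paths of two edges each sharing only their endpoints; so `La` has six edges, all
of length `1/4`.
Vertices: `0 = s`, `1 = t`, `2` (after the first outer edge), `3` (before the last outer
edge), and `4`, `5` (the midpoints of the two sides of the cycle).
Edges: `0→2` (thickness 1), `2→4`, `4→3`, `2→5`, `5→3` (thickness 1/2), `3→1`
(thickness 1). -/
noncomputable def laakso : WGraph where
  V := Fin 6
  ι := Fin 6
  finV := inferInstance
  decV := inferInstance
  finι := inferInstance
  decι := inferInstance
  src := ![0, 2, 4, 2, 5, 3]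
  dst := ![2, 4, 3, 5, 3, 1]
  len := fun _ => 1 / 4
  th := ![1, 1 / 2, 1 / 2, 1 / 2, 1 / 2, 1]
  s := 0
  t := 1

/-! ## Walks and connectivity -/

namespace WGraph

def Rch (G : WGraph) (x y : G.V) : Prop := ∃ l, G.IsWalk x y l

lemma isWalk_append (G : WGraph) {x y z : G.V} {l m : List (G.ι × Bool)}
    (h : G.IsWalk x y l) (h' : G.IsWalk y z m) : G.IsWalk x z (l ++ m) := by
  induction l generalizing x with
  | nil => cases h; exact h'
  | cons p l ih => exact ⟨h.1, ih h.2⟩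

lemma Rch.refl (G : WGraph) (x : G.V) : G.Rch x x := ⟨[], rfl⟩

lemma Rch.trans {G : WGraph} {x y z : G.V} (h : G.Rch x y) (h' : G.Rch y z) : G.Rch x z := by
  obtain ⟨l, hl⟩ := h
  obtain ⟨m, hm⟩ := h'
  exact ⟨l ++ m, G.isWalk_append hl hm⟩

lemma Rch.fwd (G : WGraph) (e : G.ι) : G.Rch (G.src e) (G.dst e) :=
  ⟨[(e, true)], by simp [IsWalk, stepSrc, stepDst]⟩

lemma Rch.bwd (G : WGraph) (e : G.ι) : G.Rch (G.dst e) (G.src e) :=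
  ⟨[(e, false)], by simp [IsWalk, stepSrc, stepDst]⟩

/-- Induction principle for reachability. -/
lemma Rch.lift {G : WGraph} (R : G.V → G.V → Prop) (hr : ∀ x, R x x)
    (ht : ∀ x y z, R x y → R y z → R x z) (hf : ∀ e, R (G.src e) (G.dst e))
    (hb : ∀ e, R (G.dst e) (G.src e)) {x y : G.V} (h : G.Rch x y) : R x y := by
  obtain ⟨l, hl⟩ := h
  induction l generalizing x with
  | nil => cases hl; exact hr _
  | cons p l ih =>
    obtain ⟨h1, h2⟩ := hl
    refine ht _ _ _ ?_ (ih h2)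
    rw [← h1]
    rcases p with ⟨e, b⟩
    cases b
    · simpa [stepSrc, stepDst] using hb e
    · simpa [stepSrc, stepDst] using hf e

lemma Rch.symm {G : WGraph} {x y : G.V} (h : G.Rch x y) : G.Rch y x :=
  Rch.lift (fun x y => G.Rch y x) (Rch.refl G) (fun _ _ _ h h' => h'.trans h)
    (Rch.bwd G) (Rch.fwd G) h

lemma walk_lip (G : WGraph) (h : G.V → ℝ) (hh : ∀ e, |h (G.dst e) - h (G.src e)| ≤ G.len e)
    {x y : G.V} {l : List (G.ι × Bool)} (hl : G.IsWalk x y l) :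
    |h x - h y| ≤ (l.map fun p => G.len p.1).sum := by
  induction l generalizing x with
  | nil => cases hl; simp
  | cons p l ih =>
    obtain ⟨h1, h2⟩ := hl
    have h3 := ih h2
    have h4 : |h x - h (G.stepDst p)| ≤ G.len p.1 := by
      rw [← h1]
      rcases p with ⟨e, b⟩
      cases b
      · simpa [stepSrc, stepDst] using hh e
      · simpa [stepSrc, stepDst, abs_sub_comm] using hh e
    simp only [List.map_cons, List.sum_cons]
    have := abs_sub_le (h x) (h (G.stepDst p)) (h y)
    linarith

lemma le_gdist (G : WGraph) (hc : ∀ x y, G.Rch x y) (h : G.V → ℝ)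
    (hh : ∀ e, |h (G.dst e) - h (G.src e)| ≤ G.len e) (x y : G.V) :
    |h x - h y| ≤ G.gdist x y := by
  refine le_csInf ?_ ?_
  · obtain ⟨l, hl⟩ := hc x y
    exact ⟨_, l, hl, rfl⟩
  · rintro c ⟨l, hl, rfl⟩
    exact G.walk_lip h hh hl

lemma gdist_nonneg (G : WGraph) (hp : ∀ e, 0 ≤ G.len e) (x y : G.V) : 0 ≤ G.gdist x y := by
  refine Real.sInf_nonneg ?_
  rintro c ⟨l, hl, rfl⟩
  refine List.sum_nonneg ?_
  intro a ha
  simp only [List.mem_map] at ha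
  obtain ⟨p, _, rfl⟩ := ha
  exact hp _

lemma gdist_edge_le (G : WGraph) (hp : ∀ e, 0 ≤ G.len e) (e : G.ι) :
    G.gdist (G.dst e) (G.src e) ≤ G.len e := by
  refine csInf_le ⟨0, ?_⟩ ⟨[(e, false)], by simp [IsWalk, stepSrc, stepDst], by simp⟩
  rintro c ⟨l, hl, rfl⟩
  refine List.sum_nonneg ?_
  intro a ha
  simp only [List.mem_map] at ha
  obtain ⟨p, _, rfl⟩ := ha
  exact hp _

end WGraph

/-! ## The combinatorial data attached to a slash power of the Laakso graph -/

/-- The sign attached to a boolean. -/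
def sgnB (b : Bool) : ℝ := if b then 1 else -1

lemma sgnB_mul_self (b : Bool) : sgnB b * sgnB b = 1 := by cases b <;> simp [sgnB]

lemma abs_sgnB (b : Bool) : |sgnB b| = 1 := by cases b <;> simp [sgnB]

structure LData (G : WGraph) (n : ℕ) where
  gE : G.ι → ℕ
  I : Type
  fI : Fintype I
  dI : DecidableEq I
  a : I → G.V
  b : I → G.V
  gI : I → ℕ
  lI : I → ℝ
  th_eq : ∀ e, G.th e = (1 / 2) ^ gE e
  len_eq : ∀ e, G.len e = (1 / 4) ^ n
  sum_th : ∑ e, G.th e * G.len e = 1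
  gE_le : ∀ e, gE e ≤ n
  conn : ∀ x y, G.Rch x y
  gI_lt : ∀ i, gI i < n
  sumI : ∑ i, (1 / 2) ^ gI i * lI i = n
  F1 : ∀ (j : ℕ) (g : G.V → ℝ),
    ∑ i, (if gI i = j then (1 / 2 : ℝ) ^ j * |g (a i) - g (b i)| else 0) ≤
    ∑ e, (if j < gE e then G.th e * |g (G.dst e) - g (G.src e)| else 0)
  F2 : ∀ (j : ℕ) (σ : I → Bool), ∃ h : G.V → ℝ,
    (∀ e, |h (G.dst e) - h (G.src e)| ≤ G.len e) ∧
    (∀ e, gE e ≤ j → h (G.dst e) = h (G.src e)) ∧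
    ∑ i, (if gI i = j then sgnB (σ i) * (1 / 2 : ℝ) ^ j * (h (a i) - h (b i)) else 0) =
    ∑ i, (if gI i = j then (1 / 2 : ℝ) ^ j * lI i / 2 else 0)

attribute [instance] LData.fI LData.dI

noncomputable def LData.zero : LData WGraph.edgeGraph 0 where
  gE := fun _ => 0
  I := Empty
  fI := inferInstance
  dI := inferInstance
  a := Empty.elim
  b := Empty.elim
  gI := Empty.elim
  lI := Empty.elim
  th_eq := by intro e; simp [WGraph.edgeGraph]
  len_eq := by intro e; simp [WGraph.edgeGraph]
  sum_th := by
    change ∑ e : Unit, (1 : ℝ) * 1 = 1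
    simp
  gE_le := by simp
  conn := by
    have h1 : WGraph.edgeGraph.Rch false true := WGraph.Rch.fwd WGraph.edgeGraph ()
    intro x y
    change Bool at x y
    cases x <;> cases y
    · exact WGraph.Rch.refl _ _
    · exact h1
    · exact h1.symm
    · exact WGraph.Rch.refl _ _
  gI_lt := by rintro ⟨⟩
  sumI := by simp
  F1 := by intro j g; simp
  F2 := by
    intro j σ
    refine ⟨fun _ => 0, ?_, ?_, ?_⟩
    · intro e; simp [WGraph.edgeGraph]
    · intro e _; rfl
    · simp

noncomputable def lamL : laakso.V → ℝ := (![0, 1, 1 / 4, 3 / 4, 1 / 2, 1 / 2] : Fin 6 → ℝ)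
noncomputable def kapL : laakso.V → ℝ := (![0, 0, 0, 0, 1, -1] : Fin 6 → ℝ)
def genL : laakso.ι → ℕ := (![0, 1, 1, 1, 1, 0] : Fin 6 → ℕ)

def v4 : {v : laakso.V // v ≠ laakso.s ∧ v ≠ laakso.t} :=
  ⟨(4 : Fin 6), by change (4 : Fin 6) ≠ 0 ∧ (4 : Fin 6) ≠ 1; decide⟩
def v5 : {v : laakso.V // v ≠ laakso.s ∧ v ≠ laakso.t} :=
  ⟨(5 : Fin 6), by change (5 : Fin 6) ≠ 0 ∧ (5 : Fin 6) ≠ 1; decide⟩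

/-- Extension of a function along the slash product with the Laakso graph. -/
noncomputable def extL (G : WGraph) (h : G.V → ℝ) (τ : G.ι → ℝ) : (G.slash laakso).V → ℝ :=
  Sum.elim h (fun p => h (G.src p.1) + lamL p.2.1 * (h (G.dst p.1) - h (G.src p.1)) +
    kapL p.2.1 * τ p.1)

lemma extL_embed (G : WGraph) (h : G.V → ℝ) (τ : G.ι → ℝ) (e : G.ι) (v : laakso.V) :
    extL G h τ (WGraph.slashEmbed G laakso e v) =
      h (G.src e) + lamL v * (h (G.dst e) - h (G.src e)) + kapL v * τ e := by
  unfold WGraph.slashEmbed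
  split_ifs with h1 h2
  · subst h1
    have h3 : lamL laakso.s = 0 := rfl
    have h4 : kapL laakso.s = 0 := rfl
    simp [extL, h3, h4]
  · subst h2
    have h3 : lamL laakso.t = 1 := rfl
    have h4 : kapL laakso.t = 0 := rfl
    simp [extL, h3, h4]
  · simp [extL]

lemma sum_slash (G : WGraph) (φ : G.ι → Fin 6 → ℝ) :
    ∑ p : (G.slash laakso).ι, φ p.1 p.2 = ∑ e, ∑ i : Fin 6, φ e i := by
  change ∑ p : G.ι × Fin 6, φ p.1 p.2 = _
  exact Fintype.sum_prod_type _

lemma embed_s (G : WGraph) (e : G.ι) :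
    WGraph.slashEmbed G laakso e (0 : Fin 6) = Sum.inl (G.src e) :=
  dif_pos (show (0 : Fin 6) = laakso.s from rfl)

lemma embed_t (G : WGraph) (e : G.ι) :
    WGraph.slashEmbed G laakso e (1 : Fin 6) = Sum.inl (G.dst e) :=
  (dif_neg (show ¬ (1 : Fin 6) = laakso.s from by change ¬ (1 : Fin 6) = 0; decide)).trans
    (dif_pos (show (1 : Fin 6) = laakso.t from rfl))

lemma embed_v (G : WGraph) (e : G.ι) (v : {v : laakso.V // v ≠ laakso.s ∧ v ≠ laakso.t}) :
    WGraph.slashEmbed G laakso e v.1 = Sum.inr (e, v) := by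
  unfold WGraph.slashEmbed
  rw [dif_neg v.2.1, dif_neg v.2.2]

lemma slash_conn (G : WGraph) (hc : ∀ x y, G.Rch x y) : ∀ x y, (G.slash laakso).Rch x y := by
  let E := WGraph.slashEmbed G laakso
  have hedge : ∀ (e : G.ι) (i : Fin 6), (G.slash laakso).Rch (E e (laakso.src i))
      (E e (laakso.dst i)) := fun e i => WGraph.Rch.fwd (G.slash laakso) (e, i)
  have hv : ∀ (e : G.ι) (v : Fin 6), (G.slash laakso).Rch (E e (0 : Fin 6)) (E e v) := by
    intro e v
    have h0 : (G.slash laakso).Rch (E e (0 : Fin 6)) (E e (2 : Fin 6)) := hedge e 0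
    have h1 : (G.slash laakso).Rch (E e (2 : Fin 6)) (E e (4 : Fin 6)) := hedge e 1
    have h2 : (G.slash laakso).Rch (E e (4 : Fin 6)) (E e (3 : Fin 6)) := hedge e 2
    have h3 : (G.slash laakso).Rch (E e (2 : Fin 6)) (E e (5 : Fin 6)) := hedge e 3
    have h5 : (G.slash laakso).Rch (E e (3 : Fin 6)) (E e (1 : Fin 6)) := hedge e 5
    fin_cases v
    · exact WGraph.Rch.refl _ _
    · exact ((h0.trans h1).trans h2).trans h5
    · exact h0
    · exact (h0.trans h1).trans h2
    · exact h0.trans h1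
    · exact h0.trans h3
  have hl : ∀ x y : G.V, (G.slash laakso).Rch (Sum.inl x) (Sum.inl y) := by
    intro x y
    have key : ∀ e, (G.slash laakso).Rch (Sum.inl (G.src e)) (Sum.inl (G.dst e)) := by
      intro e
      have := hv e 1
      rwa [show E e (0 : Fin 6) = _ from embed_s G e, show E e (1 : Fin 6) = _ from embed_t G e]
        at this
    exact WGraph.Rch.lift (fun x y => (G.slash laakso).Rch (Sum.inl x) (Sum.inl y))
      (fun _ => WGraph.Rch.refl _ _) (fun _ _ _ h h' => h.trans h') key
      (fun e => (key e).symm) (hc x y)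
  have hr : ∀ z : (G.slash laakso).V, ∃ x : G.V, (G.slash laakso).Rch (Sum.inl x) z := by
    intro z
    rcases z with x | ⟨e, v⟩
    · exact ⟨x, WGraph.Rch.refl _ _⟩
    · refine ⟨G.src e, ?_⟩
      have := hv e v.1
      rwa [show E e (0 : Fin 6) = _ from embed_s G e, show E e v.1 = _ from embed_v G e v]
        at this
  intro x y
  obtain ⟨x', hx⟩ := hr x
  obtain ⟨y', hy⟩ := hr y
  exact hx.symm.trans ((hl x' y').trans hy)

lemma F1_local (x : Fin 6 → ℝ) :
    |x 1 - x 0| ≤ |x 2 - x 0| + 1 / 2 * |x 4 - x 2| + 1 / 2 * |x 3 - x 4| + 1 / 2 * |x 5 - x 2|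
      + 1 / 2 * |x 3 - x 5| + |x 1 - x 3| := by
  have e1 : x 1 - x 0 = ((x 2 - x 0) + (1/2) * (x 4 - x 2) + (1/2) * (x 3 - x 4) +
    (1/2) * (x 5 - x 2) + (1/2) * (x 3 - x 5)) + (x 1 - x 3) := by ring
  rw [abs_le]
  have a1 := abs_le.1 (le_refl |x 2 - x 0|)
  have a2 := abs_le.1 (le_refl |x 4 - x 2|)
  have a3 := abs_le.1 (le_refl |x 3 - x 4|)
  have a4 := abs_le.1 (le_refl |x 5 - x 2|)
  have a5 := abs_le.1 (le_refl |x 3 - x 5|)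
  have a6 := abs_le.1 (le_refl |x 1 - x 3|)
  constructor <;> linarith [a1.1, a1.2, a2.1, a2.2, a3.1, a3.2, a4.1, a4.2, a5.1, a5.2, a6.1, a6.2]

lemma F1_local' (x : Fin 6 → ℝ) :
    |x 4 - x 5| ≤ 1 / 2 * |x 4 - x 2| + 1 / 2 * |x 3 - x 4| + 1 / 2 * |x 5 - x 2|
      + 1 / 2 * |x 3 - x 5| := by
  rw [abs_le]
  have a2 := abs_le.1 (le_refl |x 4 - x 2|)
  have a3 := abs_le.1 (le_refl |x 3 - x 4|)
  have a4 := abs_le.1 (le_refl |x 5 - x 2|)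
  have a5 := abs_le.1 (le_refl |x 3 - x 5|)
  constructor <;> linarith [a2.1, a2.2, a3.1, a3.2, a4.1, a4.2, a5.1, a5.2]

noncomputable def LData.succ {G : WGraph} {n : ℕ} (A : LData G n) :
    LData (G.slash laakso) (n + 1) where
  gE := fun p => A.gE p.1 + genL p.2
  I := A.I ⊕ G.ι
  fI := inferInstance
  dI := inferInstance
  a := Sum.elim (fun i => Sum.inl (A.a i)) (fun e => Sum.inr (e, v4))
  b := Sum.elim (fun i => Sum.inl (A.b i)) (fun e => Sum.inr (e, v5))
  gI := Sum.elim A.gI A.gE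
  lI := Sum.elim A.lI G.len
  th_eq := by
    rintro ⟨e, i⟩
    change G.th e * laakso.th i = (1 / 2) ^ (A.gE e + genL i)
    rw [A.th_eq, pow_add]
    congr 1
    change Fin 6 at i
    fin_cases i <;> simp [laakso, genL]
  len_eq := by
    rintro ⟨e, i⟩
    change G.len e * (1 / 4) = (1 / 4) ^ (n + 1)
    rw [A.len_eq, pow_succ]
  sum_th := by
    have := sum_slash G (fun e i => (G.th e * laakso.th i) * (G.len e * (1 / 4)))
    refine this.trans ?_
    refine Eq.trans ?_ A.sum_th
    refine Finset.sum_congr rfl fun e _ => ?_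
    simp [Fin.sum_univ_six, laakso]
    ring
  gE_le := by
    rintro ⟨e, i⟩
    have h1 := A.gE_le e
    have h2 : genL i ≤ 1 := by
      change Fin 6 at i
      fin_cases i <;> simp [genL]
    change A.gE e + genL i ≤ n + 1
    omega
  conn := slash_conn G A.conn
  gI_lt := by
    rintro (i | e)
    · have := A.gI_lt i
      change A.gI i < n + 1
      omega
    · have := A.gE_le e
      change A.gE e < n + 1
      omega
  sumI := by
    rw [Fintype.sum_sum_type]
    simp only [Sum.elim_inl, Sum.elim_inr]
    rw [A.sumI]
    have : ∑ e, (1 / 2 : ℝ) ^ A.gE e * G.len e = 1 := by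
      refine Eq.trans ?_ A.sum_th
      exact Finset.sum_congr rfl fun e _ => by rw [A.th_eq]
    rw [this]
    push_cast
    ring
  F1 := by
    intro j g
    rw [Fintype.sum_sum_type]
    simp only [Sum.elim_inl, Sum.elim_inr]
    have h1 := A.F1 j (fun x => g (Sum.inl x))
    have h2 := sum_slash G (fun e i => if j < A.gE e + genL i then
      (G.th e * laakso.th i) * |g (WGraph.slashEmbed G laakso e (laakso.dst i)) -
        g (WGraph.slashEmbed G laakso e (laakso.src i))| else 0)
    refine le_trans (add_le_add_left h1 _) (le_trans ?_ h2.ge)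
    rw [← Finset.sum_add_distrib]
    refine Finset.sum_le_sum fun e _ => ?_
    let x : Fin 6 → ℝ := fun v => g (WGraph.slashEmbed G laakso e v)
    have hx0 : g (Sum.inl (G.src e)) = x 0 := by simp only [x]; rw [embed_s]
    have hx1 : g (Sum.inl (G.dst e)) = x 1 := by simp only [x]; rw [embed_t]
    have hx4 : g (Sum.inr (e, v4)) = x 4 := by simp only [x]; rw [← embed_v]; rfl
    have hx5 : g (Sum.inr (e, v5)) = x 5 := by simp only [x]; rw [← embed_v]; rfl
    have ht : 0 ≤ G.th e := by rw [A.th_eq]; positivity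
    have l1 := mul_le_mul_of_nonneg_left (F1_local x) ht
    have l2 := mul_le_mul_of_nonneg_left (F1_local' x) ht
    rw [Fin.sum_univ_six]
    change (if j < A.gE e then G.th e * |g (Sum.inl (G.dst e)) - g (Sum.inl (G.src e))| else 0) +
      (if A.gE e = j then (1 / 2 : ℝ) ^ j * |g (Sum.inr (e, v4)) - g (Sum.inr (e, v5))| else 0)
      ≤ (if j < A.gE e + 0 then G.th e * 1 * |x 2 - x 0| else 0)
      + (if j < A.gE e + 1 then G.th e * (1 / 2) * |x 4 - x 2| else 0)
      + (if j < A.gE e + 1 then G.th e * (1 / 2) * |x 3 - x 4| else 0)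
      + (if j < A.gE e + 1 then G.th e * (1 / 2) * |x 5 - x 2| else 0)
      + (if j < A.gE e + 1 then G.th e * (1 / 2) * |x 3 - x 5| else 0)
      + (if j < A.gE e + 0 then G.th e * 1 * |x 1 - x 3| else 0)
    rw [hx0, hx1, hx4, hx5]
    rcases lt_trichotomy j (A.gE e) with hj | hj | hj
    · have c1 : ¬ A.gE e = j := by omega
      have c2 : j < A.gE e + 1 := by omega
      simp only [add_zero, if_pos hj, if_neg c1, if_pos c2]
      linarith
    · have c1 : ¬ j < A.gE e := by omega
      have c2 : j < A.gE e + 1 := by omega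
      simp only [add_zero, if_neg c1, if_pos hj.symm, if_pos c2]
      have : (1 / 2 : ℝ) ^ j = G.th e := by rw [A.th_eq, hj]
      rw [this]
      linarith
    · have c1 : ¬ A.gE e = j := by omega
      have c2 : ¬ j < A.gE e + 1 := by omega
      have c3 : ¬ j < A.gE e := by omega
      simp only [add_zero, if_neg c1, if_neg c2, if_neg c3, le_refl]
  F2 := by
    intro j σ
    obtain ⟨h, h1, h2, h3⟩ := A.F2 j (fun i => σ (Sum.inl i))
    let τ : G.ι → ℝ := fun e => if A.gE e = j then sgnB (σ (Sum.inr e)) * (G.len e / 4) else 0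
    have hlen : ∀ e, 0 ≤ G.len e := fun e => by rw [A.len_eq]; positivity
    have hdiff : ∀ (e : G.ι) (i : laakso.ι),
        extL G h τ ((G.slash laakso).dst (e, i)) - extL G h τ ((G.slash laakso).src (e, i)) =
        1 / 4 * (h (G.dst e) - h (G.src e)) +
          (kapL (laakso.dst i) - kapL (laakso.src i)) * τ e := by
      intro e i
      change extL G h τ (WGraph.slashEmbed G laakso e (laakso.dst i)) -
        extL G h τ (WGraph.slashEmbed G laakso e (laakso.src i)) = _
      rw [extL_embed, extL_embed]
      have : lamL (laakso.dst i) - lamL (laakso.src i) = 1 / 4 := by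
        change Fin 6 at i
        fin_cases i <;> simp [laakso, lamL] <;> norm_num
      linear_combination (h (G.dst e) - h (G.src e)) * this
    have hk : ∀ i : laakso.ι, |kapL (laakso.dst i) - kapL (laakso.src i)| ≤ 1 := by
      intro i
      change Fin 6 at i
      fin_cases i <;> simp [laakso, kapL]
    have hk0 : ∀ i : laakso.ι, genL i = 0 → kapL (laakso.dst i) - kapL (laakso.src i) = 0 := by
      intro i
      change Fin 6 at i
      fin_cases i <;> simp [laakso, kapL, genL]
    refine ⟨extL G h τ, ?_, ?_, ?_⟩
    · rintro ⟨e, i⟩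
      rw [hdiff]
      change _ ≤ G.len e * (1 / 4)
      by_cases hj : A.gE e = j
      · have : h (G.dst e) - h (G.src e) = 0 := sub_eq_zero.2 (h2 e hj.le)
        rw [this]
        simp only [τ, hj, if_true, mul_zero, zero_add]
        rw [abs_mul, abs_mul, abs_sgnB, abs_of_nonneg (by linarith [hlen e] : 0 ≤ G.len e / 4)]
        have := mul_le_mul_of_nonneg_right (hk i) (by linarith [hlen e] : 0 ≤ G.len e / 4)
        linarith
      · simp only [τ, hj, if_false, mul_zero, add_zero]
        rw [abs_mul, abs_of_pos (by norm_num : (0 : ℝ) < 1 / 4)]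
        have := h1 e
        linarith
    · rintro ⟨e, i⟩ he
      change A.gE e + genL i ≤ j at he
      rw [← sub_eq_zero, hdiff, h2 e (by omega)]
      by_cases hj : A.gE e = j
      · rw [hk0 i (by omega)]; ring
      · simp [τ, hj]
    · rw [Fintype.sum_sum_type, Fintype.sum_sum_type]
      simp only [Sum.elim_inl, Sum.elim_inr]
      congr 1
      refine Finset.sum_congr rfl fun e _ => ?_
      have hx4 : extL G h τ (Sum.inr (e, v4)) = h (G.src e) + 1 / 2 * (h (G.dst e) - h (G.src e))
        + 1 * τ e := rfl
      have hx5 : extL G h τ (Sum.inr (e, v5)) = h (G.src e) + 1 / 2 * (h (G.dst e) - h (G.src e))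
        + (-1) * τ e := rfl
      change (if A.gE e = j then sgnB (σ (Sum.inr e)) * (1 / 2 : ℝ) ^ j *
        (extL G h τ (Sum.inr (e, v4)) - extL G h τ (Sum.inr (e, v5))) else 0) =
        if A.gE e = j then (1 / 2 : ℝ) ^ j * G.len e / 2 else 0
      rw [hx4, hx5]
      by_cases hj : A.gE e = j
      · simp only [τ, hj, if_true]
        have := sgnB_mul_self (σ (Sum.inr e))
        linear_combination ((1 / 2 : ℝ) ^ j * G.len e / 2) * this
      · simp [hj]

noncomputable def LData.pow : (n : ℕ) → LData (laakso.slashPow n) n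
  | 0 => LData.zero
  | n + 1 => (LData.pow n).succ

/-! ## The real-valued inequality -/

lemma sum_sgnB_mul {I : Type} [Fintype I] [DecidableEq I] (i k : I) (hik : i ≠ k) :
    ∑ σ : I → Bool, sgnB (σ i) * sgnB (σ k) = 0 := by
  let τ : (I → Bool) → (I → Bool) := fun σ => Function.update σ i (!(σ i))
  have hτ : Function.Involutive τ := by
    intro σ
    ext l
    by_cases h : l = i
    · subst h; simp [τ]
    · simp [τ, h]
  let Q : Equiv.Perm (I → Bool) := Function.Involutive.toPerm τ hτ
  have h := Equiv.sum_comp Q (fun σ : I → Bool => sgnB (σ i) * sgnB (σ k))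
  have h2 : ∀ σ : I → Bool, sgnB (Q σ i) * sgnB (Q σ k) =
      -(sgnB (σ i) * sgnB (σ k)) := by
    intro σ
    change sgnB (τ σ i) * sgnB (τ σ k) = _
    have e1 : τ σ i = !(σ i) := by simp [τ]
    have e2 : τ σ k = σ k := by simp [τ, hik.symm]
    rw [e1, e2]
    cases σ i <;> cases σ k <;> simp [sgnB]
  simp only [h2, Finset.sum_neg_distrib] at h
  linarith

lemma sum_sgnB_sq {I : Type} [Fintype I] [DecidableEq I] (x : I → ℝ) :
    ∑ σ : I → Bool, (∑ i, sgnB (σ i) * x i) ^ 2 =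
      (Fintype.card (I → Bool) : ℝ) * ∑ i, x i ^ 2 := by
  have h1 : ∀ σ : I → Bool, (∑ i, sgnB (σ i) * x i) ^ 2 =
      ∑ i, ∑ k, (sgnB (σ i) * sgnB (σ k)) * (x i * x k) := by
    intro σ
    rw [sq, Finset.sum_mul_sum]
    refine Finset.sum_congr rfl fun i _ => Finset.sum_congr rfl fun k _ => by ring
  simp only [h1]
  rw [Finset.sum_comm, Finset.mul_sum]
  refine Finset.sum_congr rfl fun i _ => ?_
  rw [Finset.sum_comm, Finset.sum_eq_single i]
  · simp only [sgnB_mul_self, one_mul, Finset.sum_const, Finset.card_univ, nsmul_eq_mul]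
    ring
  · intro k _ hk
    rw [← Finset.sum_mul, sum_sgnB_mul i k hk.symm, zero_mul]
  · simp

lemma khinchin_upper {I : Type} [Fintype I] [DecidableEq I] (x : I → ℝ) :
    ∑ σ : I → Bool, |∑ i, sgnB (σ i) * x i| ≤
      (Fintype.card (I → Bool) : ℝ) * Real.sqrt (∑ i, x i ^ 2) := by
  have h := sq_sum_le_card_mul_sum_sq (s := (Finset.univ : Finset (I → Bool)))
    (f := fun σ => |∑ i, sgnB (σ i) * x i|)
  simp only [sq_abs, sum_sgnB_sq, Finset.card_univ] at h
  have hx : 0 ≤ ∑ i, x i ^ 2 := Finset.sum_nonneg fun i _ => sq_nonneg _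
  refine abs_le_of_sq_le_sq' ?_ (by positivity) |>.2
  rw [mul_pow, Real.sq_sqrt hx]
  nlinarith

lemma coarea {V ι : Type} [Fintype V] [Fintype ι] (ψ : (V → ℝ) → ℝ) (w : ι → ℝ) (p q : ι → V)
    (hadd : ∀ g g', ψ (fun v => g v + g' v) ≤ ψ g + ψ g')
    (hsmul : ∀ (t : ℝ) g, 0 ≤ t → ψ (fun v => t * g v) = t * ψ g)
    (hconst : ∀ c : ℝ, ψ (fun _ => c) ≤ 0)
    (hind : ∀ g : V → ℝ, (∀ v, g v = 0 ∨ g v = 1) → ψ g ≤ ∑ e, w e * |g (p e) - g (q e)|)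
    (g : V → ℝ) : ψ g ≤ ∑ e, w e * |g (p e) - g (q e)| := by
  classical
  induction hk : (Finset.univ.image g).card using Nat.strong_induction_on generalizing g with
  | _ k ih =>
  subst hk
  by_cases hc : ∃ c, ∀ v, g v = c
  · obtain ⟨c, hc⟩ := hc
    have : g = fun _ => c := funext hc
    subst this
    simpa using hconst c
  · have hne : (Finset.univ.image g).Nonempty := by
      by_contra h
      rw [Finset.not_nonempty_iff_eq_empty, Finset.image_eq_empty] at h
      refine hc ⟨0, fun v => ?_⟩
      exact absurd (Finset.mem_univ v) (by rw [h]; simp)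
    let M := (Finset.univ.image g).max' hne
    have hM : ∀ v, g v ≤ M := fun v => Finset.le_max' _ _ (by simp)
    have hMm : M ∈ Finset.univ.image g := Finset.max'_mem _ _
    have hne' : ((Finset.univ.image g).erase M).Nonempty := by
      by_contra h
      rw [Finset.not_nonempty_iff_eq_empty] at h
      refine hc ⟨M, fun v => ?_⟩
      by_contra hv
      have : g v ∈ (Finset.univ.image g).erase M := by simp [hv]
      rw [h] at this
      simp at this
    let M' := ((Finset.univ.image g).erase M).max' hne'
    have hM'm : M' ∈ (Finset.univ.image g).erase M := Finset.max'_mem _ _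
    have hM' : ∀ v, g v ≠ M → g v ≤ M' := fun v hv => Finset.le_max' _ _ (by simp [hv])
    have hlt : M' < M := lt_of_le_of_ne (Finset.le_max' _ _ (Finset.mem_of_mem_erase hM'm))
      (Finset.ne_of_mem_erase hM'm)
    let g' : V → ℝ := fun v => if g v = M then M' else g v
    let χ : V → ℝ := fun v => if g v = M then 1 else 0
    have hdec : g = fun v => g' v + (M - M') * χ v := by
      funext v
      by_cases hv : g v = M <;> simp [g', χ, hv]
    have hcard : (Finset.univ.image g').card < (Finset.univ.image g).card := by
      refine lt_of_le_of_lt (Finset.card_le_card (t := (Finset.univ.image g).erase M) ?_)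
        (Finset.card_erase_lt_of_mem hMm)
      intro y hy
      simp only [Finset.mem_image, Finset.mem_univ, true_and] at hy
      obtain ⟨v, rfl⟩ := hy
      by_cases hv : g v = M
      · simpa [g', hv] using hM'm
      · simp [g', hv]
    have h1 := ih _ hcard g' rfl
    have h2 := hind χ (fun v => by by_cases hv : g v = M <;> simp [χ, hv])
    have h3 : ψ g ≤ ψ g' + (M - M') * ψ χ := by
      conv_lhs => rw [hdec]
      rw [← hsmul _ _ (by linarith)]
      exact hadd _ _
    have h4 : ∀ e, |g (p e) - g (q e)| = |g' (p e) - g' (q e)| + (M - M') * |χ (p e) - χ (q e)| := by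
      intro e
      by_cases h1 : g (p e) = M <;> by_cases h2 : g (q e) = M
      · simp [g', χ, h1, h2]
      · have := hM' _ h2
        simp only [g', χ, h1, h2, if_true, if_false]
        rw [abs_of_nonneg (by linarith), abs_of_nonneg (by linarith)]
        simp
      · have := hM' _ h1
        simp only [g', χ, h1, h2, if_true, if_false]
        rw [abs_of_nonpos (by linarith), abs_of_nonpos (by linarith)]
        simp
      · simp [g', χ, h1, h2]
    have h5 : ∑ e, w e * |g (p e) - g (q e)| = ∑ e, w e * |g' (p e) - g' (q e)| +
        (M - M') * ∑ e, w e * |χ (p e) - χ (q e)| := by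
      rw [Finset.mul_sum, ← Finset.sum_add_distrib]
      refine Finset.sum_congr rfl fun e _ => ?_
      rw [h4 e]; ring
    rw [h5]
    have := mul_le_mul_of_nonneg_left h2 (by linarith : 0 ≤ M - M')
    linarith

lemma geom_filter (r p : ℝ) (hr0 : 0 < r) (hr1 : r < 1) (hp : 0 ≤ p) (n : ℕ) :
    ∑ j ∈ Finset.range n, (if r ^ j ≤ p then r ^ j else 0) ≤ p / (1 - r) := by
  induction n generalizing p with
  | zero => simp; exact div_nonneg hp (by linarith)
  | succ n ih =>
    rw [Finset.sum_range_succ']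
    have hr : 0 < 1 - r := by linarith
    have h1 := ih (p / r) (div_nonneg hp hr0.le)
    have h2 : ∑ j ∈ Finset.range n, (if r ^ (j + 1) ≤ p then r ^ (j + 1) else 0) =
        r * ∑ j ∈ Finset.range n, (if r ^ j ≤ p / r then r ^ j else 0) := by
      rw [Finset.mul_sum]
      refine Finset.sum_congr rfl fun j _ => ?_
      have : r ^ (j + 1) ≤ p ↔ r ^ j ≤ p / r := by rw [le_div_iff₀ hr0, pow_succ]
      by_cases h : r ^ j ≤ p / r
      · rw [if_pos h, if_pos (this.2 h), pow_succ]; ring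
      · rw [if_neg h, if_neg (fun h' => h (this.1 h')), mul_zero]
    rw [h2]
    by_cases h0 : (1 : ℝ) ≤ p
    · simp only [pow_zero, h0, if_true]
      -- all terms bounded by the full geometric sum
      have h3 : ∑ j ∈ Finset.range n, (if r ^ j ≤ p / r then r ^ j else 0) ≤
          ∑ j ∈ Finset.range n, r ^ j := by
        refine Finset.sum_le_sum fun j _ => ?_
        split_ifs
        · exact le_rfl
        · positivity
      have h4 : ∑ j ∈ Finset.range n, r ^ j ≤ 1 / (1 - r) := by
        rw [geom_sum_eq hr1.ne, ← neg_div_neg_eq]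
        have : 0 < r ^ n := by positivity
        rw [div_le_div_iff₀ (by linarith) hr]
        nlinarith
      have h5 : r * (1 / (1 - r)) + 1 = 1 / (1 - r) := by field_simp; ring
      have h6 : 1 / (1 - r) ≤ p / (1 - r) := by gcongr
      nlinarith [mul_le_mul_of_nonneg_left (h3.trans h4) hr0.le]
    · simp only [pow_zero, h0, if_false, add_zero]
      calc r * _ ≤ r * (p / r / (1 - r)) := mul_le_mul_of_nonneg_left h1 hr0.le
        _ = p / (1 - r) := by field_simp

section
variable {G : WGraph} {n : ℕ} (A : LData G n)

/-- The weighted total variation. -/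
noncomputable def tvar (G : WGraph) (g : G.V → ℝ) : ℝ :=
  ∑ e, G.th e * |g (G.dst e) - g (G.src e)|

lemma LData.F1' (j : ℕ) (g : G.V → ℝ) :
    ∑ i, (if A.gI i = j then (1 / 2 : ℝ) ^ j * |g (A.a i) - g (A.b i)| else 0) ≤ tvar G g := by
  refine (A.F1 j g).trans (Finset.sum_le_sum fun e _ => ?_)
  have ht : 0 ≤ G.th e := by rw [A.th_eq]; positivity
  split_ifs
  · exact le_rfl
  · positivity

/-- Pairing of `g` with the test measure. -/
noncomputable def LData.pr (j : ℕ) (σ : A.I → Bool) (g : G.V → ℝ) : ℝ :=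
  ∑ i, sgnB (σ i) * (if A.gI i = j then (1 / 2 : ℝ) ^ j * (g (A.a i) - g (A.b i)) else 0)

lemma LData.level (j : ℕ) (g : G.V → ℝ) (hg : ∀ v, g v = 0 ∨ g v = 1) :
    ∑ σ : A.I → Bool, |A.pr j σ g| ≤ (Fintype.card (A.I → Bool) : ℝ) *
      (√(tvar G g) * (if √(1 / 2) ^ j ≤ √(tvar G g) then √(1 / 2) ^ j else 0)) := by
  refine (khinchin_upper _).trans ?_
  refine mul_le_mul_of_nonneg_left ?_ (by positivity)
  have hF := A.F1' j g
  have hd : ∀ i, |g (A.a i) - g (A.b i)| = 0 ∨ |g (A.a i) - g (A.b i)| = 1 := by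
    intro i
    rcases hg (A.a i) with h | h <;> rcases hg (A.b i) with h' | h' <;> simp [h, h']
  have hterm : ∀ i, 0 ≤ (if A.gI i = j then (1 / 2 : ℝ) ^ j * |g (A.a i) - g (A.b i)| else 0) := by
    intro i; split_ifs <;> positivity
  have hB : 0 ≤ tvar G g := (Finset.sum_nonneg fun i _ => hterm i).trans hF
  have hrj : √(1 / 2 : ℝ) ^ j = √((1 / 2) ^ j) := by
    symm
    rw [Real.sqrt_eq_iff_mul_self_eq (by positivity) (by positivity), ← mul_pow,
      Real.mul_self_sqrt (by norm_num)]
  by_cases hz : ∀ i, A.gI i = j → |g (A.a i) - g (A.b i)| = 0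
  · have : ∑ i, (if A.gI i = j then (1 / 2 : ℝ) ^ j * (g (A.a i) - g (A.b i)) else 0) ^ 2 = 0 := by
      refine Finset.sum_eq_zero fun i _ => ?_
      split_ifs with h
      · rw [abs_eq_zero.1 (hz i h)]; simp
      · simp
    rw [this, Real.sqrt_zero]
    split_ifs <;> positivity
  · push Not at hz
    obtain ⟨i, hi, hi'⟩ := hz
    have h1 : (1 / 2 : ℝ) ^ j ≤ tvar G g := by
      refine le_trans ?_ ((Finset.single_le_sum (fun i _ => hterm i) (Finset.mem_univ i)).trans hF)
      rw [if_pos hi, (hd i).resolve_left hi', mul_one]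
    rw [if_pos (by rw [hrj]; exact Real.sqrt_le_sqrt h1), hrj, ← Real.sqrt_mul hB]
    refine Real.sqrt_le_sqrt ?_
    calc _ = (1 / 2) ^ j *
          ∑ i, (if A.gI i = j then (1 / 2 : ℝ) ^ j * |g (A.a i) - g (A.b i)| else 0) := by
            rw [Finset.mul_sum]
            refine Finset.sum_congr rfl fun i _ => ?_
            split_ifs with h
            · have : (g (A.a i) - g (A.b i)) ^ 2 = |g (A.a i) - g (A.b i)| := by
                rw [← sq_abs]
                rcases hd i with h | h <;> simp [h]
              rw [mul_pow, this]; ring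
            · simp
      _ ≤ (1 / 2) ^ j * tvar G g := mul_le_mul_of_nonneg_left hF (by positivity)
      _ = _ := mul_comm _ _

lemma LData.real_ineq (g : G.V → ℝ) :
    ∑ j ∈ Finset.range n, ∑ σ : A.I → Bool, |A.pr j σ g| ≤
      ∑ e, ((Fintype.card (A.I → Bool) : ℝ) * (2 + √2) * G.th e) *
        |g (G.dst e) - g (G.src e)| := by
  have hpadd : ∀ j σ (g g' : G.V → ℝ), A.pr j σ (fun v => g v + g' v) =
      A.pr j σ g + A.pr j σ g' := by
    intro j σ g g'
    simp only [LData.pr]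
    rw [← Finset.sum_add_distrib]
    refine Finset.sum_congr rfl fun i _ => ?_
    split_ifs <;> ring
  have hpsmul : ∀ j σ (t : ℝ) (g : G.V → ℝ), A.pr j σ (fun v => t * g v) =
      t * A.pr j σ g := by
    intro j σ t g
    simp only [LData.pr]
    rw [Finset.mul_sum]
    refine Finset.sum_congr rfl fun i _ => ?_
    split_ifs <;> ring
  refine coarea (fun g => ∑ j ∈ Finset.range n, ∑ σ : A.I → Bool, |A.pr j σ g|) _ G.dst G.src
    ?_ ?_ ?_ ?_ g
  · intro g g'
    simp only [hpadd]
    simp only [← Finset.sum_add_distrib]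
    exact Finset.sum_le_sum fun j _ => Finset.sum_le_sum fun σ _ => abs_add_le _ _
  · intro t g ht
    simp only [hpsmul, abs_mul, abs_of_nonneg ht, Finset.mul_sum]
  · intro c
    simp [LData.pr]
  · intro g hg
    have h1 : ∑ e, ((Fintype.card (A.I → Bool) : ℝ) * (2 + √2) * G.th e) *
        |g (G.dst e) - g (G.src e)| = (Fintype.card (A.I → Bool) : ℝ) * ((2 + √2) * tvar G g) := by
      simp only [tvar, Finset.mul_sum]
      exact Finset.sum_congr rfl fun e _ => by ring
    rw [h1]
    refine (Finset.sum_le_sum fun j _ => A.level j g hg).trans ?_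
    rw [← Finset.mul_sum, ← Finset.mul_sum]
    refine mul_le_mul_of_nonneg_left ?_ (by positivity)
    have hB : 0 ≤ tvar G g := by
      refine Finset.sum_nonneg fun e _ => ?_
      have ht : 0 ≤ G.th e := by rw [A.th_eq]; positivity
      positivity
    have hs : √(1 / 2 : ℝ) = √2 / 2 := by
      rw [Real.sqrt_eq_iff_mul_self_eq (by norm_num) (by positivity)]
      have := Real.mul_self_sqrt (show (0 : ℝ) ≤ 2 by norm_num)
      nlinarith
    have h22 := Real.mul_self_sqrt (show (0 : ℝ) ≤ 2 by norm_num)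
    have h2lt : √2 < 2 := by nlinarith [Real.sqrt_nonneg 2]
    have h2pos : 0 < √2 := by positivity
    have hgeo := geom_filter √(1 / 2) √(tvar G g) (by positivity) (by rw [hs]; linarith)
      (Real.sqrt_nonneg _) n
    refine (mul_le_mul_of_nonneg_left hgeo (Real.sqrt_nonneg _)).trans_eq ?_
    rw [← mul_div_assoc, Real.mul_self_sqrt hB, hs]
    rw [div_eq_iff (by linarith)]
    have : (2 + √2) * (1 - √2 / 2) = 1 := by nlinarith
    linear_combination (-tvar G g) * this

end

/-! ## Linearization of bi-Lipschitz maps -/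

lemma mollify {P X : Type*} [NormedAddCommGroup P] [NormedSpace ℝ P] [FiniteDimensional ℝ P]
    [MeasurableSpace P] [BorelSpace P] (μ : Measure P) [μ.IsAddHaarMeasure]
    [NormedAddCommGroup X] [NormedSpace ℝ X] [CompleteSpace X]
    (N : P → ℝ) (C D : ℝ) (hNC : ∀ u, N u ≤ C * ‖u‖) (hC : 0 ≤ C) (hD : 0 ≤ D)
    (f : P → X) (hhi : ∀ x y, ‖f x - f y‖ ≤ D * N (x - y)) :
    ∃ g : P → X, ContDiff ℝ 1 g ∧ (∀ x v, ‖g (x + v) - g x‖ ≤ D * N v) ∧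
      ∃ C0 : ℝ, 0 ≤ C0 ∧ ∀ x, ‖g x - f x‖ ≤ C0 := by
  have hlip : ∀ x y, ‖f x - f y‖ ≤ D * C * ‖x - y‖ := by
    intro x y
    refine (hhi x y).trans ?_
    rw [mul_assoc]
    exact mul_le_mul_of_nonneg_left (hNC _) hD
  have hcont : Continuous f := by
    have : LipschitzWith (Real.toNNReal (D * C)) f := by
      refine LipschitzWith.of_dist_le_mul fun x y => ?_
      rw [dist_eq_norm, dist_eq_norm, Real.coe_toNNReal _ (by positivity)]
      exact hlip x y
    exact this.continuous
  let φ : ContDiffBump (0 : P) := ⟨1, 2, by norm_num, by norm_num⟩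
  let g : P → X := convolution (φ.normed μ) f (ContinuousLinearMap.lsmul ℝ ℝ) μ
  have hex : ∀ x, Integrable (fun t => φ.normed μ t • f (x - t)) μ := fun x =>
    φ.hasCompactSupport_normed.convolutionExists_left_of_continuous_right
      (ContinuousLinearMap.lsmul ℝ ℝ) φ.integrable_normed.locallyIntegrable hcont x
  refine ⟨g, ?_, ?_, D * C * 2, by positivity, ?_⟩
  · exact_mod_cast φ.hasCompactSupport_normed.contDiff_convolution_left
      (n := 1) (ContinuousLinearMap.lsmul ℝ ℝ) φ.contDiff_normed hcont.locallyIntegrable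
  · intro x v
    change ‖∫ t, φ.normed μ t • f (x + v - t) ∂μ - ∫ t, φ.normed μ t • f (x - t) ∂μ‖ ≤ _
    rw [← integral_sub (hex _) (hex _)]
    calc _ ≤ ∫ t, φ.normed μ t * (D * N v) ∂μ := by
          refine norm_integral_le_of_norm_le (φ.integrable_normed.mul_const _) ?_
          refine Filter.Eventually.of_forall fun t => ?_
          rw [← smul_sub, norm_smul, Real.norm_of_nonneg (φ.nonneg_normed t)]
          refine mul_le_mul_of_nonneg_left ?_ (φ.nonneg_normed t)
          have := hhi (x + v - t) (x - t)
          rwa [show x + v - t - (x - t) = v by abel] at this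
      _ = D * N v := by rw [integral_mul_const, φ.integral_normed, one_mul]
  · intro x
    rw [← dist_eq_norm]
    refine φ.dist_normed_convolution_le hcont.aestronglyMeasurable ?_
    intro y hy
    rw [dist_eq_norm]
    refine (hlip y x).trans (mul_le_mul_of_nonneg_left ?_ (by positivity))
    rw [← dist_eq_norm]
    exact (Metric.mem_ball.1 hy).le

lemma line_sum {P X : Type*} [NormedAddCommGroup P] [NormedSpace ℝ P]
    [NormedAddCommGroup X] (g : P → X) (y v : P) (M : ℕ) :
    ‖g (y + (M : ℝ) • v) - g y‖ ≤
      ∑ c : Fin M, ‖g (y + ((c : ℕ) : ℝ) • v + v) - g (y + ((c : ℕ) : ℝ) • v)‖ := by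
  rw [← Finset.sum_range (fun c : ℕ => ‖g (y + (c : ℝ) • v + v) - g (y + (c : ℝ) • v)‖)]
  have h := Finset.sum_range_sub (fun c : ℕ => g (y + (c : ℝ) • v)) M
  simp only [Nat.cast_zero, zero_smul, add_zero] at h
  rw [← h]
  refine (norm_sum_le _ _).trans_eq (Finset.sum_congr rfl fun c _ => ?_)
  rw [show y + ((c + 1 : ℕ) : ℝ) • v = y + (c : ℝ) • v + v by push_cast; rw [add_smul]; simp; abel]

lemma box_average {P X K : Type*} [NormedAddCommGroup P] [NormedSpace ℝ P]
    [NormedAddCommGroup X] [Fintype K] [DecidableEq K] (g : P → X) (v : K → P) (M : ℕ) (hM : 0 < M)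
    (c : K → ℝ) (hc : ∀ k y, c k ≤ ‖g (y + (M : ℝ) • v k) - g y‖) :
    ∃ x : P, ‖x‖ ≤ M * ∑ k, ‖v k‖ ∧ ∑ k, c k / M ≤ ∑ k, ‖g (x + v k) - g x‖ := by
  haveI : NeZero M := ⟨hM.ne'⟩
  let x : (K → Fin M) → P := fun m => ∑ j, (((m j : Fin M) : ℕ) : ℝ) • v j
  have hMr : (0 : ℝ) < M := by exact_mod_cast hM
  have key : ∀ k, ∑ _m : K → Fin M, c k / M ≤ ∑ m : K → Fin M, ‖g (x m + v k) - g (x m)‖ := by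
    intro k
    rw [← (Equiv.funSplitAt k (Fin M)).symm.sum_comp (fun _ => c k / (M : ℝ)),
      ← (Equiv.funSplitAt k (Fin M)).symm.sum_comp (fun m => ‖g (x m + v k) - g (x m)‖),
      Fintype.sum_prod_type_right, Fintype.sum_prod_type_right]
    refine Finset.sum_le_sum fun r _ => ?_
    let y : P := ∑ j, (if h : j = k then (0 : ℝ) else ((r ⟨j, h⟩ : ℕ) : ℝ)) • v j
    have hx : ∀ a : Fin M, x ((Equiv.funSplitAt k (Fin M)).symm (a, r)) =
        y + ((a : ℕ) : ℝ) • v k := by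
      intro a
      have e1 : ((a : ℕ) : ℝ) • v k = ∑ j, (if j = k then ((a : ℕ) : ℝ) else 0) • v j := by
        simp [ite_smul]
      rw [e1]
      simp only [x, y]
      rw [← Finset.sum_add_distrib]
      refine Finset.sum_congr rfl fun j _ => ?_
      rw [← add_smul]
      congr 1
      by_cases h : j = k
      · subst h; simp [Equiv.funSplitAt, Equiv.piSplitAt]
      · simp [Equiv.funSplitAt, Equiv.piSplitAt, h]
    simp only [hx]
    refine le_trans ?_ (line_sum g y (v k) M)
    simp only [Finset.sum_const, Finset.card_univ, Fintype.card_fin, nsmul_eq_mul]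
    rw [mul_div_cancel₀ _ hMr.ne']
    exact hc k y
  have htot : ∑ _m : K → Fin M, ∑ k, c k / M ≤
      ∑ m : K → Fin M, ∑ k, ‖g (x m + v k) - g (x m)‖ := by
    rw [Finset.sum_comm, Finset.sum_comm (s := Finset.univ (α := K → Fin M))]
    exact Finset.sum_le_sum fun k _ => key k
  obtain ⟨m, _, hm⟩ := Finset.exists_le_of_sum_le Finset.univ_nonempty htot
  refine ⟨x m, ?_, hm⟩
  refine (norm_sum_le _ _).trans ?_
  rw [Finset.mul_sum]
  refine Finset.sum_le_sum fun j _ => ?_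
  rw [norm_smul, Real.norm_of_nonneg (by positivity)]
  refine mul_le_mul_of_nonneg_right ?_ (norm_nonneg _)
  exact_mod_cast (m j).2.le

lemma linearize {P X K : Type*} [NormedAddCommGroup P] [NormedSpace ℝ P] [FiniteDimensional ℝ P]
    [MeasurableSpace P] [BorelSpace P] (μ : Measure P) [μ.IsAddHaarMeasure]
    [NormedAddCommGroup X] [NormedSpace ℝ X] [CompleteSpace X] [Fintype K]
    (N : P → ℝ) (C D : ℝ) (hNs : ∀ (t : ℝ) u, 0 < t → N (t • u) = t * N u)
    (hNC : ∀ u, N u ≤ C * ‖u‖) (hC : 0 ≤ C) (hD : 0 ≤ D)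
    (f : P → X) (hlo : ∀ x y, N (x - y) ≤ ‖f x - f y‖)
    (hhi : ∀ x y, ‖f x - f y‖ ≤ D * N (x - y)) (u : K → P) (ε : ℝ) (hε : 0 < ε) :
    ∃ T : P →L[ℝ] X, (∀ v, ‖T v‖ ≤ D * N v) ∧ ∑ k, N (u k) - 2 * ε ≤ ∑ k, ‖T (u k)‖ := by
  classical
  obtain ⟨g, hg, hgl, C0, hC0, hgf⟩ := mollify μ N C D hNC hC hD f hhi
  obtain ⟨R, hR⟩ := exists_nat_gt (2 * C0 * Fintype.card K / ε)
  have hRp : (0 : ℝ) < R := lt_of_le_of_lt (by positivity) hR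
  have hR0 : 0 < R := by exact_mod_cast hRp
  have hlow : ∀ k y, R * N (u k) - 2 * C0 ≤ ‖g (y + (R : ℝ) • u k) - g y‖ := by
    intro k y
    have h1 := hlo (y + (R : ℝ) • u k) y
    rw [add_sub_cancel_left, hNs _ _ hRp] at h1
    have h2 := hgf (y + (R : ℝ) • u k)
    have h3 := hgf y
    have h4 : f (y + (R : ℝ) • u k) - f y = (g (y + (R : ℝ) • u k) - g y) -
      (g (y + (R : ℝ) • u k) - f (y + (R : ℝ) • u k)) + (g y - f y) := by abel
    have h5 : ‖f (y + (R : ℝ) • u k) - f y‖ ≤ ‖g (y + (R : ℝ) • u k) - g y‖ +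
        ‖g (y + (R : ℝ) • u k) - f (y + (R : ℝ) • u k)‖ + ‖g y - f y‖ := by
      rw [h4]
      refine (norm_add_le _ _).trans ?_
      gcongr
      exact norm_sub_le _ _
    linarith
  have hpt : ∀ i : ℕ, ∃ x : P, ‖x‖ ≤ R * ∑ k, ‖u k‖ ∧
      (∑ k, N (u k) - ε) / (i + 1 : ℝ) ≤ ∑ k, ‖g (x + (1 / (i + 1 : ℝ)) • u k) - g x‖ := by
    intro i
    have hi : (0 : ℝ) < i + 1 := by positivity
    obtain ⟨x, hx, hx'⟩ := box_average g (fun k => (1 / (i + 1 : ℝ)) • u k) (R * (i + 1))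
      (by positivity) (fun k => R * N (u k) - 2 * C0) (by
        intro k y
        have : ((R * (i + 1) : ℕ) : ℝ) • (1 / (i + 1 : ℝ)) • u k = (R : ℝ) • u k := by
          rw [smul_smul]; congr 1; push_cast; field_simp
        rw [this]
        exact hlow k y)
    refine ⟨x, ?_, le_trans ?_ hx'⟩
    · refine hx.trans_eq ?_
      rw [Finset.mul_sum, Finset.mul_sum]
      refine Finset.sum_congr rfl fun k _ => ?_
      rw [norm_smul, Real.norm_of_nonneg (by positivity)]
      push_cast
      field_simp
    · rw [← Finset.sum_div, Finset.sum_sub_distrib, ← Finset.mul_sum]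
      simp only [Finset.sum_const, Finset.card_univ, nsmul_eq_mul]
      push_cast
      rw [div_le_div_iff₀ hi (by positivity)]
      rw [div_lt_iff₀ hε] at hR
      have h6 : (Fintype.card K : ℝ) * (2 * C0) ≤ R * ε := by linarith
      nlinarith
  choose x hx hx' using hpt
  obtain ⟨z, _, φ, hφ, hlim⟩ := (isCompact_closedBall (0 : P) (R * ∑ k, ‖u k‖)).tendsto_subseq
    (x := x) (fun i => by rw [mem_closedBall_zero_iff]; exact hx i)
  have hstrict : HasStrictFDerivAt g (fderiv ℝ g z) z :=
    hg.contDiffAt.hasStrictFDerivAt (by norm_num)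
  refine ⟨fderiv ℝ g z, ?_, ?_⟩
  · intro v
    have hd : HasFDerivAt g (fderiv ℝ g z) z := hstrict.hasFDerivAt
    have h1 := hd.lim_real v
    have h2 := h1.norm
    refine le_of_tendsto h2 ?_
    filter_upwards [Filter.eventually_gt_atTop (0 : ℝ)] with c hc
    rw [norm_smul, Real.norm_of_nonneg hc.le]
    have h3 := hgl z (c⁻¹ • v)
    rw [hNs _ _ (inv_pos.2 hc)] at h3
    calc c * ‖g (z + c⁻¹ • v) - g z‖ ≤ c * (D * (c⁻¹ * N v)) :=
          mul_le_mul_of_nonneg_left h3 hc.le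
      _ = D * N v := by field_simp
  · have hS : 0 ≤ ∑ k, ‖u k‖ := Finset.sum_nonneg fun k _ => norm_nonneg _
    let c : ℝ := ε / (∑ k, ‖u k‖ + 1)
    have hc : 0 < c := by positivity
    have hcS : c * ∑ k, ‖u k‖ ≤ ε := by
      simp only [c]
      rw [div_mul_eq_mul_div, div_le_iff₀ (by positivity)]
      nlinarith
    have ho := hstrict.isLittleO.def hc
    have hinv : Filter.Tendsto (fun i : ℕ => (1 / ((φ i : ℕ) + 1 : ℝ))) Filter.atTop (nhds 0) :=
      tendsto_one_div_add_atTop_nhds_zero_nat.comp hφ.tendsto_atTop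
    have hev : ∀ k, ∀ᶠ i in Filter.atTop,
        ‖g (x (φ i) + (1 / ((φ i : ℕ) + 1 : ℝ)) • u k) - g (x (φ i)) -
          fderiv ℝ g z ((x (φ i) + (1 / ((φ i : ℕ) + 1 : ℝ)) • u k) - x (φ i))‖ ≤
        c * ‖(x (φ i) + (1 / ((φ i : ℕ) + 1 : ℝ)) • u k) - x (φ i)‖ := by
      intro k
      have ht : Filter.Tendsto (fun i : ℕ => (x (φ i) + (1 / ((φ i : ℕ) + 1 : ℝ)) • u k, x (φ i)))
          Filter.atTop (nhds (z, z)) := by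
        refine Filter.Tendsto.prodMk_nhds ?_ hlim
        have := hlim.add (hinv.smul_const (u k))
        simpa using this
      exact ht.eventually ho
    obtain ⟨i, hi⟩ := (Filter.eventually_all.2 hev).exists
    have hq : (0 : ℝ) < (φ i : ℕ) + 1 := by positivity
    have h1 := hx' (φ i)
    have h2 : ∀ k, ‖g (x (φ i) + (1 / ((φ i : ℕ) + 1 : ℝ)) • u k) - g (x (φ i))‖ ≤
        (‖fderiv ℝ g z (u k)‖ + c * ‖u k‖) / ((φ i : ℕ) + 1 : ℝ) := by
      intro k
      have h3 := hi k
      rw [add_sub_cancel_left, map_smul, norm_smul, Real.norm_of_nonneg (by positivity)] at h3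
      have h4 := norm_sub_norm_le (g (x (φ i) + (1 / ((φ i : ℕ) + 1 : ℝ)) • u k) - g (x (φ i)))
        ((1 / ((φ i : ℕ) + 1 : ℝ)) • fderiv ℝ g z (u k))
      rw [norm_smul, Real.norm_of_nonneg (by positivity)] at h4
      rw [show (‖fderiv ℝ g z (u k)‖ + c * ‖u k‖) / ((φ i : ℕ) + 1 : ℝ) =
        1 / ((φ i : ℕ) + 1 : ℝ) * ‖fderiv ℝ g z (u k)‖ +
          c * (1 / ((φ i : ℕ) + 1 : ℝ) * ‖u k‖) by ring]
      linarith
    have h5 := h1.trans (Finset.sum_le_sum fun k _ => h2 k)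
    rw [← Finset.sum_div, div_le_div_iff_of_pos_right hq, Finset.sum_add_distrib,
      ← Finset.mul_sum] at h5
    linarith


lemma L1_norm_sum {Ω V : Type*} [MeasurableSpace Ω] {ν : Measure Ω} [Fintype V]
    (c : V → ℝ) (F : V → Lp ℝ 1 ν) :
    (‖∑ v, c v • F v‖ = ∫ ω, |∑ v, c v * F v ω| ∂ν) ∧
      Integrable (fun ω => |∑ v, c v * F v ω|) ν := by
  classical
  have key : ∀ s : Finset V, ((∑ v ∈ s, c v • F v : Lp ℝ 1 ν) : Ω → ℝ) =ᵐ[ν]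
      fun ω => ∑ v ∈ s, c v * F v ω := by
    intro s
    induction s using Finset.induction_on with
    | empty =>
      filter_upwards [Lp.coeFn_zero ℝ 1 ν] with ω h
      rw [Finset.sum_empty, Finset.sum_empty]
      exact h
    | insert a s ha ih =>
      rw [Finset.sum_insert ha]
      filter_upwards [Lp.coeFn_add (c a • F a) (∑ v ∈ s, c v • F v), Lp.coeFn_smul (c a) (F a),
        ih] with ω h1 h2 h3
      rw [h1, Finset.sum_insert ha, Pi.add_apply, h2, h3]
      simp
  have h1 := key Finset.univ
  have h2 := L1.integrable_coeFn (∑ v, c v • F v)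
  constructor
  · rw [L1.norm_eq_integral_norm]
    refine integral_congr_ae ?_
    filter_upwards [h1] with ω h
    rw [h, Real.norm_eq_abs]
  · refine (h2.norm).congr ?_
    filter_upwards [h1] with ω h
    rw [h, Real.norm_eq_abs]

lemma L1_transfer {Ω V K E : Type*} [MeasurableSpace Ω] {ν : Measure Ω} [Fintype V] [Fintype K]
    [Fintype E] [DecidableEq V] (c : K → V → ℝ) (w : E → ℝ) (p q : E → V)
    (H : ∀ g : V → ℝ, ∑ k, |∑ v, c k v * g v| ≤ ∑ e, w e * |g (p e) - g (q e)|)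
    (F : V → Lp ℝ 1 ν) :
    ∑ k, ‖∑ v, c k v • F v‖ ≤ ∑ e, w e * ‖F (p e) - F (q e)‖ := by
  have h1 : ∀ e, F (p e) - F (q e) =
      ∑ v, ((if p e = v then (1 : ℝ) else 0) - (if q e = v then (1 : ℝ) else 0)) • F v := by
    intro e
    simp [sub_smul, Finset.sum_sub_distrib]
  have h2 : ∀ e ω, F (p e) ω - F (q e) ω =
      ∑ v, ((if p e = v then (1 : ℝ) else 0) - (if q e = v then (1 : ℝ) else 0)) * F v ω := by
    intro e ω
    simp [sub_mul, Finset.sum_sub_distrib]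
  simp_rw [h1, (L1_norm_sum _ F).1, ← integral_const_mul]
  rw [← integral_finsetSum _ fun k _ => (L1_norm_sum (c k) F).2,
    ← integral_finsetSum _ fun e _ => ((L1_norm_sum _ F).2.const_mul (w e))]
  refine integral_mono (integrable_finsetSum _ fun k _ => (L1_norm_sum (c k) F).2)
    (integrable_finsetSum _ fun e _ => ((L1_norm_sum _ F).2.const_mul (w e))) fun ω => ?_
  simp_rw [← h2]
  exact H fun v => F v ω

section TC
variable {V : Type*} [Fintype V] [DecidableEq V] {d : V → V → ℝ}

lemma TC_bdd (hd : ∀ x y, 0 ≤ d x y) (μ : V → ℝ) : BddBelow { c : ℝ | ∃ (n : ℕ) (a : Fin n → ℝ)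
    (x y : Fin n → V), (∀ i, 0 ≤ a i) ∧
    (∀ z : V, μ z = ∑ i, a i * ((if x i = z then (1 : ℝ) else 0) -
      (if y i = z then (1 : ℝ) else 0))) ∧
    c = ∑ i, a i * d (x i) (y i) } := by
  refine ⟨0, ?_⟩
  rintro c ⟨n, a, x, y, ha, -, rfl⟩
  exact Finset.sum_nonneg fun i _ => mul_nonneg (ha i) (hd _ _)

lemma TCnorm_le {J : Type*} [Fintype J] (hd : ∀ x y, 0 ≤ d x y) (μ : V → ℝ) (a : J → ℝ)
    (x y : J → V) (ha : ∀ i, 0 ≤ a i) (hμ : ∀ z : V, μ z = ∑ i, a i *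
      ((if x i = z then (1 : ℝ) else 0) - (if y i = z then (1 : ℝ) else 0))) :
    TCnorm d μ ≤ ∑ i, a i * d (x i) (y i) := by
  let E := (Fintype.equivFin J).symm
  refine csInf_le (TC_bdd hd μ) ⟨_, a ∘ E, x ∘ E, y ∘ E, fun i => ha _, ?_, ?_⟩
  · intro z
    rw [hμ z]
    exact (Equiv.sum_comp E fun i => a i *
      ((if x i = z then (1 : ℝ) else 0) - (if y i = z then (1 : ℝ) else 0))).symm
  · exact (Equiv.sum_comp E fun i => a i * d (x i) (y i)).symm

lemma TC_plan (s : V) (μ : V → ℝ) (h0 : ∑ v, μ v = 0) :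
    ∀ z : V, μ z = ∑ i : V ⊕ V, (Sum.elim (fun v => max (μ v) 0) (fun v => max (-μ v) 0)) i *
      ((if (Sum.elim id (fun _ => s)) i = z then (1 : ℝ) else 0) -
        (if (Sum.elim (fun _ => s) id) i = z then (1 : ℝ) else 0)) := by
  intro z
  have hm : ∀ v, max (μ v) 0 - max (-μ v) 0 = μ v := by
    intro v
    rcases le_total (μ v) 0 with h | h
    · rw [max_eq_right h, max_eq_left (by linarith)]; ring
    · rw [max_eq_left h, max_eq_right (by linarith)]; ring
  rw [Fintype.sum_sum_type, ← Finset.sum_add_distrib]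
  have : ∀ v, max (μ v) 0 * ((if v = z then (1 : ℝ) else 0) - (if s = z then (1 : ℝ) else 0)) +
      max (-μ v) 0 * ((if s = z then (1 : ℝ) else 0) - (if v = z then (1 : ℝ) else 0)) =
      μ v * (if v = z then (1 : ℝ) else 0) - μ v * (if s = z then (1 : ℝ) else 0) := by
    intro v
    rw [← mul_sub]
    conv_rhs => rw [← hm v]
    ring
  refine Eq.trans ?_ (Finset.sum_congr rfl fun v _ => (this v).symm)
  rw [Finset.sum_sub_distrib, ← Finset.sum_mul, h0]
  simp

lemma TC_nonempty (s : V) (μ : V → ℝ) (h0 : ∑ v, μ v = 0) : { c : ℝ | ∃ (n : ℕ) (a : Fin n → ℝ)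
    (x y : Fin n → V), (∀ i, 0 ≤ a i) ∧
    (∀ z : V, μ z = ∑ i, a i * ((if x i = z then (1 : ℝ) else 0) -
      (if y i = z then (1 : ℝ) else 0))) ∧
    c = ∑ i, a i * d (x i) (y i) }.Nonempty := by
  let E := (Fintype.equivFin (V ⊕ V)).symm
  refine ⟨_, _, (Sum.elim (fun v => max (μ v) 0) (fun v => max (-μ v) 0)) ∘ E,
    (Sum.elim id (fun _ => s)) ∘ E, (Sum.elim (fun _ => s) id) ∘ E, ?_, ?_, rfl⟩
  · intro i
    simp only [Function.comp]
    rcases E i with v | v <;> simp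
  · intro z
    rw [TC_plan s μ h0 z]
    exact (Equiv.sum_comp E fun i => (Sum.elim (fun v => max (μ v) 0) (fun v => max (-μ v) 0)) i *
      ((if (Sum.elim id (fun _ => s)) i = z then (1 : ℝ) else 0) -
        (if (Sum.elim (fun _ => s) id) i = z then (1 : ℝ) else 0))).symm

lemma TCnorm_le_l1 (hd : ∀ x y, 0 ≤ d x y) (s : V) (μ : V → ℝ) (h0 : ∑ v, μ v = 0) :
    TCnorm d μ ≤ (∑ v, (d v s + d s v)) * ∑ v, |μ v| := by
  refine (TCnorm_le hd μ _ _ _ ?_ (TC_plan s μ h0)).trans ?_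
  · rintro (v | v) <;> simp
  rw [Fintype.sum_sum_type, ← Finset.sum_add_distrib, Finset.mul_sum]
  refine Finset.sum_le_sum fun v _ => ?_
  simp only [Sum.elim_inl, Sum.elim_inr, id]
  have h1 : d v s + d s v ≤ ∑ v, (d v s + d s v) :=
    Finset.single_le_sum (f := fun v => d v s + d s v)
      (fun v _ => add_nonneg (hd _ _) (hd _ _)) (Finset.mem_univ v)
  have h2 : max (μ v) 0 ≤ |μ v| := max_le (le_abs_self _) (abs_nonneg _)
  have h3 : max (-μ v) 0 ≤ |μ v| := max_le (neg_le_abs _) (abs_nonneg _)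
  calc _ ≤ |μ v| * d v s + |μ v| * d s v :=
        add_le_add (mul_le_mul_of_nonneg_right h2 (hd _ _)) (mul_le_mul_of_nonneg_right h3 (hd _ _))
    _ = (d v s + d s v) * |μ v| := by ring
    _ ≤ _ := mul_le_mul_of_nonneg_right h1 (abs_nonneg _)

lemma le_TCnorm (s : V) (μ : V → ℝ) (h0 : ∑ v, μ v = 0) (h : V → ℝ)
    (hh : ∀ x y, |h x - h y| ≤ d x y) : ∑ v, μ v * h v ≤ TCnorm d μ := by
  refine le_csInf (TC_nonempty s μ h0) ?_
  rintro c ⟨n, a, x, y, ha, hμ, rfl⟩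
  calc ∑ v, μ v * h v = ∑ v, ∑ i, a i * ((if x i = v then (1 : ℝ) else 0) -
      (if y i = v then (1 : ℝ) else 0)) * h v := by
        refine Finset.sum_congr rfl fun v _ => ?_
        rw [hμ v, Finset.sum_mul]
    _ = ∑ i, a i * (h (x i) - h (y i)) := by
        rw [Finset.sum_comm]
        refine Finset.sum_congr rfl fun i _ => ?_
        simp [sub_mul, mul_sub, Finset.sum_sub_distrib]
    _ ≤ _ := Finset.sum_le_sum fun i _ =>
        mul_le_mul_of_nonneg_left ((le_abs_self _).trans (hh _ _)) (ha i)

lemma TCnorm_smul_le (hd : ∀ x y, 0 ≤ d x y) (s : V) (μ : V → ℝ) (h0 : ∑ v, μ v = 0) (t : ℝ)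
    (ht : 0 < t) : TCnorm d (t • μ) ≤ t * TCnorm d μ := by
  rw [← div_le_iff₀' ht]
  refine le_csInf (TC_nonempty s μ h0) ?_
  rintro c ⟨n, a, x, y, ha, hμ, rfl⟩
  rw [div_le_iff₀' ht]
  refine (TCnorm_le hd (t • μ) (fun i => t * a i) x y
    (fun i => mul_nonneg ht.le (ha i)) ?_).trans ?_
  · intro z
    rw [Pi.smul_apply, hμ z, smul_eq_mul, Finset.mul_sum]
    exact Finset.sum_congr rfl fun i _ => by ring
  · rw [Finset.mul_sum]
    exact le_of_eq (Finset.sum_congr rfl fun i _ => by ring)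

lemma TCnorm_smul (hd : ∀ x y, 0 ≤ d x y) (s : V) (μ : V → ℝ) (h0 : ∑ v, μ v = 0) (t : ℝ)
    (ht : 0 < t) : TCnorm d (t • μ) = t * TCnorm d μ := by
  refine le_antisymm (TCnorm_smul_le hd s μ h0 t ht) ?_
  have h := TCnorm_smul_le hd s (t • μ) (by simp [← Finset.mul_sum, h0]) t⁻¹ (by positivity)
  rw [smul_smul, inv_mul_cancel₀ ht.ne', one_smul] at h
  rwa [inv_mul_eq_div, le_div_iff₀' ht] at h

end TC

lemma c1_nonempty {V : Type} [Fintype V] [DecidableEq V] {d : V → V → ℝ}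
    (hd : ∀ x y, 0 ≤ d x y) (s : V) (c : ℝ) (hc : 0 < c)
    (hl : ∀ μ : V → ℝ, ∑ v, μ v = 0 → c * ∑ v, |μ v| ≤ TCnorm d μ) :
    ∃ D : ℝ, 1 ≤ D ∧ ∃ (Ω : Type) (_ : MeasurableSpace Ω) (ν : Measure Ω)
    (f : {μ : V → ℝ // ∑ x, μ x = 0} → Lp ℝ 1 ν), ∀ x y : {μ : V → ℝ // ∑ x, μ x = 0},
      TCnorm d (fun v => x.1 v - y.1 v) ≤ dist (f x) (f y) ∧
      dist (f x) (f y) ≤ D * TCnorm d (fun v => x.1 v - y.1 v) := by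
  let C : ℝ := ∑ v, (d v s + d s v)
  have hC : 0 ≤ C := Finset.sum_nonneg fun v _ => add_nonneg (hd _ _) (hd _ _)
  let _ : MeasurableSpace V := ⊤
  have : DiscreteMeasurableSpace V := ⟨fun _ => trivial⟩
  have hm : ∀ g : V → ℝ, MemLp g 1 (Measure.count : Measure V) := fun g => by
    rw [memLp_one_iff_integrable]
    exact Integrable.of_finite
  refine ⟨max 1 (C / c), le_max_left _ _, V, ⊤, Measure.count,
    fun μ => (hm fun v => C * μ.1 v).toLp, ?_⟩
  intro x y
  have h0 : ∑ v, (x.1 v - y.1 v) = 0 := by rw [Finset.sum_sub_distrib, x.2, y.2, sub_zero]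
  have hdist : dist ((hm fun v => C * x.1 v).toLp) ((hm fun v => C * y.1 v).toLp) =
      C * ∑ v, |x.1 v - y.1 v| := by
    rw [dist_eq_norm, ← MemLp.toLp_sub, L1.norm_eq_integral_norm]
    refine (integral_congr_ae ((MemLp.coeFn_toLp _).fun_comp norm)).trans ?_
    simp only [Function.comp]
    rw [integral_count, Finset.mul_sum]
    refine Finset.sum_congr rfl fun v _ => ?_
    rw [Pi.sub_apply, ← mul_sub, Real.norm_eq_abs, abs_mul, abs_of_nonneg hC]
  rw [hdist]
  refine ⟨TCnorm_le_l1 hd s _ h0, ?_⟩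
  have h1 := hl _ h0
  have h2 : 0 ≤ ∑ v, |x.1 v - y.1 v| := Finset.sum_nonneg fun v _ => abs_nonneg _
  calc C * ∑ v, |x.1 v - y.1 v| = (C / c) * (c * ∑ v, |x.1 v - y.1 v|) := by field_simp
    _ ≤ (C / c) * TCnorm d (fun v => x.1 v - y.1 v) :=
        mul_le_mul_of_nonneg_left h1 (by positivity)
    _ ≤ _ := mul_le_mul_of_nonneg_right (le_max_right _ _) (le_trans (by positivity) h1)

/-- Projection of a function on `V` to the functions of zero sum. -/
noncomputable def projZ {V : Type*} [Fintype V] [DecidableEq V] (s : V) (p : V → ℝ) : V → ℝ :=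
  fun v => p v - (∑ w, p w) * (if s = v then 1 else 0)

lemma projZ_sum {V : Type*} [Fintype V] [DecidableEq V] (s : V) (p : V → ℝ) :
    ∑ v, projZ s p v = 0 := by
  simp [projZ, Finset.sum_sub_distrib]

lemma projZ_of_sum {V : Type*} [Fintype V] [DecidableEq V] (s : V) (p : V → ℝ)
    (hp : ∑ v, p v = 0) : projZ s p = p := by
  funext v
  simp [projZ, hp]

lemma projZ_smul {V : Type*} [Fintype V] [DecidableEq V] (s : V) (t : ℝ) (p : V → ℝ) :
    projZ s (t • p) = t • projZ s p := by
  funext v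
  simp only [projZ, Pi.smul_apply, smul_eq_mul, ← Finset.mul_sum]
  ring

lemma projZ_sub {V : Type*} [Fintype V] [DecidableEq V] (s : V) (p q : V → ℝ) :
    projZ s (p - q) = fun v => projZ s p v - projZ s q v := by
  funext v
  simp only [projZ, Pi.sub_apply, Finset.sum_sub_distrib]
  ring

lemma projZ_l1 {V : Type*} [Fintype V] [DecidableEq V] (s : V) (p : V → ℝ) :
    ∑ v, |projZ s p v| ≤ (2 * Fintype.card V) * ‖p‖ := by
  have h1 : ∀ v, |p v| ≤ ‖p‖ := fun v => norm_le_pi_norm p v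
  have h2 : ∑ v, |p v| ≤ Fintype.card V * ‖p‖ := by
    refine (Finset.sum_le_sum fun v _ => h1 v).trans ?_
    simp
  have h3 : ∑ v, |projZ s p v| ≤ ∑ v, (|p v| + |∑ w, p w| * (if s = v then 1 else 0)) := by
    refine Finset.sum_le_sum fun v _ => (abs_sub _ _).trans ?_
    rw [abs_mul]
    split_ifs <;> simp
  rw [Finset.sum_add_distrib, ← Finset.mul_sum] at h3
  have h4 := Finset.abs_sum_le_sum_abs p Finset.univ
  simp at h3
  linarith

section
variable {G : WGraph} {n : ℕ} (A : LData G n)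

/-- The test measures. -/
noncomputable def LData.tm (j : ℕ) (σ : A.I → Bool) (v : G.V) : ℝ :=
  ∑ i, sgnB (σ i) * (if A.gI i = j then (1 / 2 : ℝ) ^ j *
    ((if A.a i = v then 1 else 0) - (if A.b i = v then 1 else 0)) else 0)

lemma LData.tm_mul (j : ℕ) (σ : A.I → Bool) (g : G.V → ℝ) :
    ∑ v, A.tm j σ v * g v = A.pr j σ g := by
  simp only [LData.tm, LData.pr, Finset.sum_mul]
  rw [Finset.sum_comm]
  refine Finset.sum_congr rfl fun i _ => ?_
  split_ifs
  · simp only [mul_assoc, ← Finset.mul_sum, sub_mul, Finset.sum_sub_distrib]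
    simp
  · simp

lemma LData.tm_sum (j : ℕ) (σ : A.I → Bool) : ∑ v, A.tm j σ v = 0 := by
  have h := A.tm_mul j σ (fun _ => 1)
  simpa [LData.pr] using h

lemma LData.len_nonneg (A : LData G n) (e : G.ι) : 0 ≤ G.len e := by
  rw [A.len_eq]; positivity

lemma LData.tm_norm (j : ℕ) (σ : A.I → Bool) :
    ∑ i, (if A.gI i = j then (1 / 2 : ℝ) ^ j * A.lI i / 2 else 0) ≤
      TCnorm G.gdist (A.tm j σ) := by
  obtain ⟨h, h1, -, h3⟩ := A.F2 j σ
  refine le_trans (le_of_eq ?_) (le_TCnorm G.s (A.tm j σ) (A.tm_sum j σ) h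
    (G.le_gdist A.conn h h1))
  rw [A.tm_mul, ← h3, LData.pr]
  refine Finset.sum_congr rfl fun i _ => ?_
  split_ifs <;> ring

lemma LData.l1_le (A : LData G n) (μ : G.V → ℝ) (h0 : ∑ v, μ v = 0) :
    ((1 / 4) ^ n / 2) * ∑ v, |μ v| ≤ TCnorm G.gdist μ := by
  let c : ℝ := (1 / 4) ^ n / 2
  have hc : 0 < c := by positivity
  have hs : ∀ x : ℝ, |(SignType.sign x : ℝ)| ≤ 1 := by
    intro x
    rcases lt_trichotomy x 0 with h | h | h <;> simp [h]
  refine le_trans (le_of_eq ?_) (le_TCnorm G.s μ h0 (fun v => c * (SignType.sign (μ v) : ℝ))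
    (G.le_gdist A.conn _ ?_))
  · rw [Finset.mul_sum]
    refine Finset.sum_congr rfl fun v _ => ?_
    rw [← self_mul_sign (μ v)]
    simp only [c]
    ring
  · intro e
    rw [A.len_eq, ← mul_sub, abs_mul, abs_of_pos hc]
    have h1 := abs_sub (SignType.sign (μ (G.dst e)) : ℝ) (SignType.sign (μ (G.src e)) : ℝ)
    have h2 := hs (μ (G.dst e))
    have h3 := hs (μ (G.src e))
    calc c * _ ≤ c * 2 := mul_le_mul_of_nonneg_left (by linarith) hc.le
      _ = _ := by simp only [c]; ring

lemma LData.lower (A : LData G n) (D : ℝ) (hD : 1 ≤ D) {Ω : Type} [MeasurableSpace Ω] (ν : Measure Ω)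
    (f : {μ : G.V → ℝ // ∑ x, μ x = 0} → Lp ℝ 1 ν)
    (hf : ∀ x y : {μ : G.V → ℝ // ∑ x, μ x = 0},
      TCnorm G.gdist (fun v => x.1 v - y.1 v) ≤ dist (f x) (f y) ∧
      dist (f x) (f y) ≤ D * TCnorm G.gdist (fun v => x.1 v - y.1 v)) :
    (2 - √2) / 8 * n ≤ D := by
  have hd : ∀ x y, 0 ≤ G.gdist x y := G.gdist_nonneg A.len_nonneg
  have hC : 0 ≤ ∑ v, (G.gdist v G.s + G.gdist G.s v) :=
    Finset.sum_nonneg fun v _ => add_nonneg (hd _ _) (hd _ _)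
  set L : ℝ := (Fintype.card (A.I → Bool) : ℝ) with hL
  have hL0 : 0 < L := by rw [hL]; exact_mod_cast Fintype.card_pos
  have main : ∀ ε : ℝ, 0 < ε → L * (n / 2) - 2 * ε ≤ L * (2 + √2) * D := by
    intro ε hε
    obtain ⟨T, hT1, hT2⟩ := linearize (volume : Measure (G.V → ℝ))
      (fun p => TCnorm G.gdist (projZ G.s p))
      ((∑ v, (G.gdist v G.s + G.gdist G.s v)) * (2 * Fintype.card G.V)) D
      (fun t u ht => by
        rw [projZ_smul, TCnorm_smul hd G.s _ (projZ_sum _ _) t ht])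
      (fun u => by
        refine (TCnorm_le_l1 hd G.s _ (projZ_sum _ _)).trans ?_
        rw [mul_assoc]
        exact mul_le_mul_of_nonneg_left (projZ_l1 _ _) hC)
      (by positivity) (by linarith)
      (fun p => f ⟨projZ G.s p, projZ_sum _ _⟩)
      (fun x y => by
        rw [projZ_sub, ← dist_eq_norm]
        exact (hf ⟨projZ G.s x, projZ_sum _ _⟩ ⟨projZ G.s y, projZ_sum _ _⟩).1)
      (fun x y => by
        rw [projZ_sub, ← dist_eq_norm]
        exact (hf ⟨projZ G.s x, projZ_sum _ _⟩ ⟨projZ G.s y, projZ_sum _ _⟩).2)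
      (fun k : Fin n × (A.I → Bool) => A.tm k.1 k.2) ε hε
    have hlow : L * (n / 2) ≤ ∑ k : Fin n × (A.I → Bool),
        TCnorm G.gdist (projZ G.s (A.tm k.1 k.2)) := by
      have h1 : ∀ k : Fin n × (A.I → Bool),
          ∑ i, (if A.gI i = k.1 then (1 / 2 : ℝ) ^ (k.1 : ℕ) * A.lI i / 2 else 0) ≤
          TCnorm G.gdist (projZ G.s (A.tm k.1 k.2)) := by
        intro k
        rw [projZ_of_sum _ _ (A.tm_sum _ _)]
        exact A.tm_norm _ _
      refine le_trans (le_of_eq ?_) (Finset.sum_le_sum fun k _ => h1 k)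
      rw [Fintype.sum_prod_type]
      simp only [Finset.sum_const, Finset.card_univ, nsmul_eq_mul]
      rw [← Finset.mul_sum, ← hL, Finset.sum_comm]
      congr 1
      rw [← A.sumI, Finset.sum_div]
      refine Finset.sum_congr rfl fun i _ => ?_
      rw [Finset.sum_eq_single (⟨A.gI i, A.gI_lt i⟩ : Fin n)]
      · simp
      · intro b _ hb
        rw [if_neg]
        intro h
        exact hb (Fin.ext h.symm)
      · simp
    have hTs : ∀ u : G.V → ℝ, T u = ∑ v, u v • T (Pi.single v 1) := by
      intro u
      conv_lhs => rw [← LinearMap.sum_single_apply (fun _ => ℝ) u, map_sum]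
      refine Finset.sum_congr rfl fun v _ => ?_
      rw [← map_smul]
      congr 1
      funext w
      by_cases h : w = v
      · subst h; simp
      · simp [h]
    have hup := L1_transfer (fun k : Fin n × (A.I → Bool) => A.tm k.1 k.2)
      (fun e => L * (2 + √2) * G.th e) G.dst G.src
      (by
        intro g
        have := A.real_ineq g
        simp only [A.tm_mul]
        rw [Fintype.sum_prod_type]
        rw [← Fin.sum_univ_eq_sum_range (fun j => ∑ σ : A.I → Bool, |A.pr j σ g|) n] at this
        exact this) (fun v => T (Pi.single v 1))
    simp only [← hTs] at hup
    have hedge : ∀ e, ‖T (Pi.single (G.dst e) 1) - T (Pi.single (G.src e) 1)‖ ≤ D * G.len e := by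
      intro e
      rw [← map_sub]
      refine (hT1 _).trans (mul_le_mul_of_nonneg_left ?_ (by linarith))
      rw [projZ_of_sum]
      · refine (TCnorm_le (J := Unit) hd _ (fun _ => 1) (fun _ => G.dst e) (fun _ => G.src e)
          (fun _ => zero_le_one) ?_).trans ?_
        · intro z
          simp [Pi.single_apply, eq_comm]
        · simpa using G.gdist_edge_le A.len_nonneg e
      · simp [Finset.sum_sub_distrib]
    have hsum : ∑ e, L * (2 + √2) * G.th e *
        ‖T (Pi.single (G.dst e) 1) - T (Pi.single (G.src e) 1)‖ ≤ L * (2 + √2) * D := by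
      calc _ ≤ ∑ e, L * (2 + √2) * D * (G.th e * G.len e) := by
            refine Finset.sum_le_sum fun e _ => ?_
            have hth : 0 ≤ G.th e := by rw [A.th_eq]; positivity
            calc _ ≤ L * (2 + √2) * G.th e * (D * G.len e) :=
                  mul_le_mul_of_nonneg_left (hedge e) (by positivity)
              _ = _ := by ring
        _ = _ := by rw [← Finset.mul_sum, A.sum_th, mul_one]
    linarith
  have h1 : L * (n / 2) ≤ L * (2 + √2) * D := by
    refine le_of_forall_pos_le_add fun ε hε => ?_
    have := main (ε / 2) (by positivity)
    linarith
  have h2 : (n / 2 : ℝ) ≤ (2 + √2) * D := by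
    rw [mul_assoc] at h1
    exact le_of_mul_le_mul_left h1 hL0
  have h3 : √2 * √2 = 2 := Real.mul_self_sqrt (by norm_num)
  have h4 : 0 ≤ √2 := Real.sqrt_nonneg 2
  have h5 : 0 < 2 - √2 := by nlinarith
  have h6 := mul_le_mul_of_nonneg_left h2 h5.le
  have h7 : (2 - √2) * ((2 + √2) * D) = 2 * D := by
    calc _ = (4 - √2 * √2) * D := by ring
      _ = _ := by rw [h3]; ring
  rw [h7] at h6
  linarith

end

/-- For every `n ≥ 0`, the Laakso graphs satisfy
`c₁(TC(La^{⊘n})) ≥ ((2−√2)/8)·n`. -/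
theorem c1_TC_laakso_lower (n : ℕ) :
    c1TC (laakso.slashPow n).gdist ≥ (2 - Real.sqrt 2) / 8 * n := by
  have A : LData (laakso.slashPow n) n := LData.pow n
  refine le_csInf ?_ ?_
  · exact c1_nonempty ((laakso.slashPow n).gdist_nonneg A.len_nonneg) (laakso.slashPow n).s
      ((1 / 4) ^ n / 2) (by positivity) A.l1_le
  · rintro D ⟨hD, Ω, mΩ, ν, f, hf⟩
    exact A.lower D hD ν f hf
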